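/- Let $\Sigma^s = \{X \in \mathbb{R}^{d+1} : 0 < X_{d+1} < s\}$ with $s = \min(r, R)$ and $r, R \ge 1/2$. Define, for $A := \max\{1, d \Lambda \lambda^{-1} \|D^2\phi_1\|_{L^\infty}\}$, the function $Q(x, x_{d+1}) := \phi_R(x) + A R^{-1} x_{d+1}(2 - R^{-1} x_{d+1})$. Then $\mathcal{M}^+_{\lambda,\Lambda}(D^2 Q(X)) < 0$ for all $X \in \Sigma^s$; that is, $Q$ is a classical strict supersolution of the Pucci maximal equation in the strip. -/

import Mathlib

/-!
The Pucci maximal operator is a supremum of the linear functionals `M ↦ tr (P M)` over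
`lam I ≤ P ≤ Lam I`, so on a block diagonal matrix it is at most the sum of its values on the
blocks. If `M ≤ c I` as quadratic forms, then `tr (P M) ≤ c tr P`, and `tr P` lies between `lam` and
`Lam` times the size of `P`. The block `R⁻² D²φ₁` therefore contributes at most
`R⁻² d Lam ‖D²φ₁‖_∞ ≤ R⁻² lam A`, and the corner `-2 A R⁻²` at most `-2 lam A R⁻²`. The supremum
`‖D²φ₁‖_∞` is finite because `φ₁ x = g (|x|²)` with `g s = s / (1 + s)`, for which `g'` and `s g''`
are bounded on `s ≥ 0`.
-/

open Matrix

/-- The auxiliary function `φ₁(x) = |x|² / (1 + |x|²)`. -/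
noncomputable def phiOne {d : ℕ} (x : EuclideanSpace ℝ (Fin d)) : ℝ :=
  ‖x‖ ^ 2 / (1 + ‖x‖ ^ 2)

/-- Hessian matrix of `φ₁` at `y`, via the second iterated Fréchet derivative. -/
noncomputable def hessPhiOne {d : ℕ} (y : EuclideanSpace ℝ (Fin d)) :
    Matrix (Fin d) (Fin d) ℝ :=
  Matrix.of fun i j =>
    iteratedFDeriv ℝ 2 (phiOne (d := d)) y
      ![EuclideanSpace.single i (1:ℝ), EuclideanSpace.single j (1:ℝ)]

/-- Sup norm of the Hessian of `φ₁`. -/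
noncomputable def hessPhiOneSup (d : ℕ) : ℝ :=
  ⨆ y : EuclideanSpace ℝ (Fin d), ‖iteratedFDeriv ℝ 2 (phiOne (d := d)) y‖

/-- The Pucci maximal operator, variational form, on a general finite index type. -/
noncomputable def pucciSup {m : Type*} [Fintype m] [DecidableEq m]
    (lam Lam : ℝ) (M : Matrix m m ℝ) : ℝ :=
  sSup {t : ℝ | ∃ A : Matrix m m ℝ,
    (A - lam • (1 : Matrix m m ℝ)).PosSemidef ∧
    ((Lam • (1 : Matrix m m ℝ)) - A).PosSemidef ∧ t = (A * M).trace}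

lemma trace_mul_fromBlocks_zero {m n α : Type*} [Fintype m] [Fintype n]
    [NonUnitalNonAssocSemiring α] (A : Matrix (m ⊕ n) (m ⊕ n) α) (M : Matrix m m α)
    (N : Matrix n n α) :
    (A * fromBlocks M 0 0 N).trace = (A.toBlocks₁₁ * M).trace + (A.toBlocks₂₂ * N).trace := by
  conv_lhs => rw [← fromBlocks_toBlocks A, fromBlocks_multiply]
  simp [trace]

section QuadraticForm

variable {m : Type*} [Fintype m]

lemma trace_mul_le_of_posSemidef {P H : Matrix m m ℝ} (hP : P.PosSemidef) {c : ℝ}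
    (hH : ∀ v, v ⬝ᵥ H *ᵥ v ≤ c * (v ⬝ᵥ v)) : (P * H).trace ≤ c * P.trace := by
  classical
  open scoped MatrixOrder Matrix.Norms.L2Operator in
  obtain ⟨B, rfl⟩ := CStarAlgebra.nonneg_iff_eq_star_mul_self.1 hP.nonneg
  rw [star_eq_conjTranspose, conjTranspose_eq_transpose_of_trivial]
  calc (Bᵀ * B * H).trace = ∑ i, B i ⬝ᵥ H *ᵥ B i := by
        rw [Matrix.mul_assoc, trace_mul_comm]
        exact Finset.sum_congr rfl fun i _ => (dotProduct_mulVec _ _ _).symm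
    _ ≤ ∑ i, c * (B i ⬝ᵥ B i) := Finset.sum_le_sum fun i _ => hH (B i)
    _ = c * (Bᵀ * B).trace := by
        rw [← Finset.mul_sum, trace_mul_comm]
        rfl

lemma dotProduct_mulVec_le_norm_toEuclideanCLM [DecidableEq m] (M : Matrix m m ℝ) (v : m → ℝ) :
    v ⬝ᵥ M *ᵥ v ≤ ‖toEuclideanCLM (𝕜 := ℝ) M‖ * (v ⬝ᵥ v) := by
  set w : EuclideanSpace ℝ m := WithLp.toLp 2 v
  calc v ⬝ᵥ M *ᵥ v = inner ℝ w (toEuclideanCLM (𝕜 := ℝ) M w) :=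
        (inner_toEuclideanCLM M w w).symm
    _ ≤ ‖w‖ * ‖toEuclideanCLM (𝕜 := ℝ) M w‖ := real_inner_le_norm _ _
    _ ≤ ‖w‖ * (‖toEuclideanCLM (𝕜 := ℝ) M‖ * ‖w‖) := by
        gcongr
        exact ContinuousLinearMap.le_opNorm _ _
    _ = ‖toEuclideanCLM (𝕜 := ℝ) M‖ * (v ⬝ᵥ v) := by
        have hvw : v ⬝ᵥ v = ‖w‖ * ‖w‖ := real_inner_self_eq_norm_mul_norm w
        rw [hvw]
        ring

end QuadraticForm

/-- A coefficient matrix with ellipticity constants `lam` and `Lam`, i.e. `lam I ≤ A ≤ Lam I` in the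
Loewner order; `pucciSup lam Lam` is the supremum of `tr (A M)` over these matrices `A`. -/
def IsElliptic {m : Type*} [Fintype m] [DecidableEq m] (lam Lam : ℝ) (A : Matrix m m ℝ) : Prop :=
  (A - lam • (1 : Matrix m m ℝ)).PosSemidef ∧ ((Lam • (1 : Matrix m m ℝ)) - A).PosSemidef

namespace IsElliptic

variable {m n : Type*} [Fintype m] [DecidableEq m] [Fintype n] [DecidableEq n]
  {lam Lam : ℝ} {A : Matrix m m ℝ}

lemma smul_one (hle : lam ≤ Lam) : IsElliptic lam Lam (lam • (1 : Matrix m m ℝ)) := by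
  refine ⟨by simpa using PosSemidef.zero, ?_⟩
  rw [← sub_smul]
  exact PosSemidef.one.smul (sub_nonneg.2 hle)

lemma posSemidef (hA : IsElliptic lam Lam A) (hlam : 0 ≤ lam) : A.PosSemidef := by
  simpa using hA.1.add (PosSemidef.one.smul hlam)

lemma submatrix (hA : IsElliptic lam Lam A) {f : n → m} (hf : Function.Injective f) :
    IsElliptic lam Lam (A.submatrix f f) := by
  have hlower := hA.1.submatrix f
  have hupper := hA.2.submatrix f
  rw [submatrix_sub, Pi.sub_apply, Pi.sub_apply, submatrix_smul, Pi.smul_apply, Pi.smul_apply,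
    submatrix_one _ hf] at hlower hupper
  exact ⟨hlower, hupper⟩

lemma card_mul_le_trace (hA : IsElliptic lam Lam A) : Fintype.card m * lam ≤ A.trace := by
  simpa [trace_sub, mul_comm] using hA.1.trace_nonneg

lemma trace_le_card_mul (hA : IsElliptic lam Lam A) : A.trace ≤ Fintype.card m * Lam := by
  simpa [trace_sub, mul_comm] using hA.2.trace_nonneg

end IsElliptic

section Pucci

variable {m n : Type*} [Fintype m] [DecidableEq m] [Fintype n] [DecidableEq n] {lam Lam : ℝ}

lemma pucciSup_le (hle : lam ≤ Lam) {M : Matrix m m ℝ} {b : ℝ}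
    (hb : ∀ A, IsElliptic lam Lam A → (A * M).trace ≤ b) : pucciSup lam Lam M ≤ b := by
  obtain ⟨h₁, h₂⟩ := IsElliptic.smul_one (m := m) hle
  refine csSup_le ⟨_, _, h₁, h₂, rfl⟩ ?_
  rintro _ ⟨A, hA₁, hA₂, rfl⟩
  exact hb A ⟨hA₁, hA₂⟩

lemma pucciSup_le_of_dotProduct_mulVec_le_of_nonneg (hlam : 0 ≤ lam) (hle : lam ≤ Lam)
    {M : Matrix m m ℝ} {c : ℝ} (hc : 0 ≤ c) (hM : ∀ v, v ⬝ᵥ M *ᵥ v ≤ c * (v ⬝ᵥ v)) :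
    pucciSup lam Lam M ≤ c * (Fintype.card m * Lam) :=
  pucciSup_le hle fun _ hA =>
    (trace_mul_le_of_posSemidef (hA.posSemidef hlam) hM).trans
      (mul_le_mul_of_nonneg_left hA.trace_le_card_mul hc)

lemma pucciSup_le_of_dotProduct_mulVec_le_of_nonpos (hlam : 0 ≤ lam) (hle : lam ≤ Lam)
    {M : Matrix m m ℝ} {c : ℝ} (hc : c ≤ 0) (hM : ∀ v, v ⬝ᵥ M *ᵥ v ≤ c * (v ⬝ᵥ v)) :
    pucciSup lam Lam M ≤ c * (Fintype.card m * lam) :=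
  pucciSup_le hle fun _ hA =>
    (trace_mul_le_of_posSemidef (hA.posSemidef hlam) hM).trans
      (mul_le_mul_of_nonpos_left hA.card_mul_le_trace hc)

lemma pucciSup_of_const_le [Unique m] {c : ℝ} (hlam : 0 ≤ lam) (hle : lam ≤ Lam) (hc : c ≤ 0) :
    pucciSup lam Lam (Matrix.of fun (_ _ : m) => c) ≤ c * lam := by
  have hform : ∀ v, v ⬝ᵥ (Matrix.of fun (_ _ : m) => c) *ᵥ v ≤ c * (v ⬝ᵥ v) := fun v => by
    simp [dotProduct, mulVec, mul_left_comm]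
  simpa using pucciSup_le_of_dotProduct_mulVec_le_of_nonpos hlam hle hc hform

lemma trace_mul_le_pucciSup (hlam : 0 ≤ lam) {A : Matrix m m ℝ} (hA : IsElliptic lam Lam A)
    (M : Matrix m m ℝ) : (A * M).trace ≤ pucciSup lam Lam M := by
  refine le_csSup ⟨‖toEuclideanCLM (𝕜 := ℝ) M‖ * (Fintype.card m * Lam), ?_⟩
    ⟨A, hA.1, hA.2, rfl⟩
  rintro _ ⟨A', hA'₁, hA'₂, rfl⟩
  have hA' : IsElliptic lam Lam A' := ⟨hA'₁, hA'₂⟩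
  exact (trace_mul_le_of_posSemidef (hA'.posSemidef hlam)
    (dotProduct_mulVec_le_norm_toEuclideanCLM M)).trans
      (mul_le_mul_of_nonneg_left hA'.trace_le_card_mul (norm_nonneg _))

lemma pucciSup_fromBlocks_zero_le (hlam : 0 ≤ lam) (hle : lam ≤ Lam) (M : Matrix m m ℝ)
    (N : Matrix n n ℝ) :
    pucciSup lam Lam (fromBlocks M 0 0 N) ≤ pucciSup lam Lam M + pucciSup lam Lam N := by
  refine pucciSup_le hle fun A hA => ?_
  rw [trace_mul_fromBlocks_zero]
  exact add_le_add (trace_mul_le_pucciSup hlam (hA.submatrix Sum.inl_injective) M)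
    (trace_mul_le_pucciSup hlam (hA.submatrix Sum.inr_injective) N)

end Pucci

section Radial

variable {E : Type*} [NormedAddCommGroup E] [InnerProductSpace ℝ E]

lemma hasFDerivAt_comp_norm_sq {g : ℝ → ℝ} {g' : ℝ} {x : E} (hg : HasDerivAt g g' (‖x‖ ^ 2)) :
    HasFDerivAt (fun y : E => g (‖y‖ ^ 2)) ((2 * g') • innerSL ℝ x) x := by
  refine (hg.comp_hasFDerivAt x (hasStrictFDerivAt_norm_sq x).hasFDerivAt).congr_fderiv ?_
  rw [← Nat.cast_smul_eq_nsmul ℝ, smul_smul, mul_comm, Nat.cast_ofNat]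

/-- The real inner product as a bilinear map, for use in Hessians. The type of `innerSL ℝ` is
semilinear over `starRingEnd ℝ`, which blocks adding it to bilinear maps `E →L[ℝ] E →L[ℝ] ℝ`. -/
noncomputable def realInnerCLM (E : Type*) [NormedAddCommGroup E] [InnerProductSpace ℝ E] :
    E →L[ℝ] E →L[ℝ] ℝ :=
  innerSL ℝ

lemma hasFDerivAt_fderiv_comp_norm_sq {g g' : ℝ → ℝ} {g'' : ℝ} {x : E}
    (hg : ∀ s, 0 ≤ s → HasDerivAt g (g' s) s) (hg' : HasDerivAt g' g'' (‖x‖ ^ 2)) :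
    HasFDerivAt (fderiv ℝ fun y : E => g (‖y‖ ^ 2))
      ((2 * g' (‖x‖ ^ 2)) • realInnerCLM E +
        ((2 * (2 * g'')) • innerSL ℝ x).smulRight (innerSL ℝ x)) x := by
  have hgrad : (fderiv ℝ fun y : E => g (‖y‖ ^ 2)) =
      fun y => (2 * g' (‖y‖ ^ 2)) • innerSL ℝ y :=
    funext fun y => (hasFDerivAt_comp_norm_sq (hg _ (sq_nonneg ‖y‖))).fderiv
  rw [hgrad]
  exact (hasFDerivAt_comp_norm_sq (hg'.const_mul 2)).smul (realInnerCLM E).hasFDerivAt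

lemma norm_iteratedFDeriv_two_comp_norm_sq_le {g g' : ℝ → ℝ} {g'' : ℝ} {x : E}
    (hg : ∀ s, 0 ≤ s → HasDerivAt g (g' s) s) (hg' : HasDerivAt g' g'' (‖x‖ ^ 2)) :
    ‖iteratedFDeriv ℝ 2 (fun y : E => g (‖y‖ ^ 2)) x‖ ≤
      2 * |g' (‖x‖ ^ 2)| + 4 * |g''| * ‖x‖ ^ 2 := by
  rw [← norm_iteratedFDeriv_fderiv, norm_iteratedFDeriv_one,
    (hasFDerivAt_fderiv_comp_norm_sq hg hg').fderiv]
  refine (norm_add_le _ _).trans (add_le_add ?_ (le_of_eq ?_))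
  · rw [norm_smul, norm_mul, Real.norm_ofNat, Real.norm_eq_abs]
    exact mul_le_of_le_one_right (by positivity) (norm_innerSL_le ℝ)
  · rw [ContinuousLinearMap.norm_smulRight_apply, norm_smul, innerSL_apply_norm, norm_mul, norm_mul,
      Real.norm_ofNat, Real.norm_eq_abs]
    ring

end Radial

lemma dotProduct_of_bilin_mulVec_le {E ι : Type*} [NormedAddCommGroup E] [InnerProductSpace ℝ E]
    [Fintype ι] (B : E →L[ℝ] E →L[ℝ] ℝ) (b : OrthonormalBasis ι ℝ E) (v : ι → ℝ) :
    v ⬝ᵥ (Matrix.of fun i j => B (b i) (b j)) *ᵥ v ≤ ‖B‖ * (v ⬝ᵥ v) := by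
  set w : E := ∑ i, v i • b i with hw
  have hform : v ⬝ᵥ (Matrix.of fun i j => B (b i) (b j)) *ᵥ v = B w w := by
    simp only [hw, map_sum, map_smul, _root_.sum_apply, _root_.smul_apply, smul_eq_mul,
      dotProduct, mulVec, Matrix.of_apply, Finset.mul_sum]
    rw [Finset.sum_comm]
    exact Finset.sum_congr rfl fun i _ => Finset.sum_congr rfl fun j _ => by ring
  have hnorm : v ⬝ᵥ v = ‖w‖ * ‖w‖ := by
    rw [← real_inner_self_eq_norm_mul_norm, hw, b.orthonormal.inner_sum]
    rfl
  rw [hform, hnorm, ← mul_assoc]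
  exact (le_abs_self _).trans (B.le_opNorm₂ w w)

section PhiOne

variable {d : ℕ}

lemma hasDerivAt_div_one_add {s : ℝ} (hs : 1 + s ≠ 0) :
    HasDerivAt (fun s : ℝ => s / (1 + s)) (1 / (1 + s) ^ 2) s := by
  refine ((hasDerivAt_id s).div ((hasDerivAt_id s).const_add 1) hs).congr_deriv ?_
  simp

lemma hasDerivAt_one_div_one_add_sq {s : ℝ} (hs : 1 + s ≠ 0) :
    HasDerivAt (fun s : ℝ => 1 / (1 + s) ^ 2) (-2 / (1 + s) ^ 3) s := by
  refine ((hasDerivAt_const s (1 : ℝ)).div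
    (((hasDerivAt_id s).const_add 1).fun_pow 2) (pow_ne_zero 2 hs)).congr_deriv ?_
  simp only [id]
  field_simp
  ring

lemma norm_iteratedFDeriv_two_phiOne_le (x : EuclideanSpace ℝ (Fin d)) :
    ‖iteratedFDeriv ℝ 2 (phiOne (d := d)) x‖ ≤ 10 := by
  have hs : 0 ≤ ‖x‖ ^ 2 := sq_nonneg _
  refine (norm_iteratedFDeriv_two_comp_norm_sq_le
    (fun s hs => hasDerivAt_div_one_add (by positivity))
    (hasDerivAt_one_div_one_add_sq (by positivity))).trans ?_
  generalize ‖x‖ ^ 2 = s at hs ⊢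
  have hg' : |1 / (1 + s) ^ 2| ≤ 1 := by
    rw [abs_of_nonneg (by positivity)]
    exact div_le_self zero_le_one (one_le_pow₀ (by linarith))
  have hg'' : |-2 / (1 + s) ^ 3| * s ≤ 2 := by
    rw [abs_div, abs_neg, abs_two, abs_of_nonneg (by positivity), div_mul_eq_mul_div,
      div_le_iff₀ (by positivity)]
    have hcube : 1 + s ≤ (1 + s) ^ 3 := le_self_pow₀ (by linarith) three_ne_zero
    linarith
  linarith

lemma norm_iteratedFDeriv_two_phiOne_le_hessPhiOneSup (x : EuclideanSpace ℝ (Fin d)) :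
    ‖iteratedFDeriv ℝ 2 (phiOne (d := d)) x‖ ≤ hessPhiOneSup d :=
  le_ciSup (f := fun y => ‖iteratedFDeriv ℝ 2 (phiOne (d := d)) y‖)
    ⟨10, Set.forall_mem_range.2 norm_iteratedFDeriv_two_phiOne_le⟩ x

lemma hessPhiOneSup_nonneg (d : ℕ) : 0 ≤ hessPhiOneSup d :=
  Real.iSup_nonneg fun _ => norm_nonneg _

lemma hessPhiOne_eq_fderiv_fderiv (y : EuclideanSpace ℝ (Fin d)) :
    hessPhiOne y = Matrix.of fun i j => fderiv ℝ (fderiv ℝ phiOne) y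
      (EuclideanSpace.basisFun (Fin d) ℝ i) (EuclideanSpace.basisFun (Fin d) ℝ j) := by
  ext i j
  simp [hessPhiOne, iteratedFDeriv_two_apply]

lemma dotProduct_hessPhiOne_mulVec_le (y : EuclideanSpace ℝ (Fin d)) (v : Fin d → ℝ) :
    v ⬝ᵥ hessPhiOne y *ᵥ v ≤ hessPhiOneSup d * (v ⬝ᵥ v) := by
  have hnorm : ‖fderiv ℝ (fderiv ℝ (phiOne (d := d))) y‖ ≤ hessPhiOneSup d := by
    rw [← norm_iteratedFDeriv_one, norm_iteratedFDeriv_fderiv]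
    exact norm_iteratedFDeriv_two_phiOne_le_hessPhiOneSup y
  rw [hessPhiOne_eq_fderiv_fderiv]
  exact (dotProduct_of_bilin_mulVec_le _ (EuclideanSpace.basisFun (Fin d) ℝ) v).trans
    (mul_le_mul_of_nonneg_right hnorm (Finset.sum_nonneg fun i _ => mul_self_nonneg (v i)))

lemma pucciSup_smul_hessPhiOne_le {lam Lam c : ℝ} (hlam : 0 ≤ lam) (hle : lam ≤ Lam) (hc : 0 ≤ c)
    (y : EuclideanSpace ℝ (Fin d)) :
    pucciSup lam Lam (c • hessPhiOne y) ≤ c * (d * Lam * hessPhiOneSup d) := by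
  have hform : ∀ v, v ⬝ᵥ (c • hessPhiOne y) *ᵥ v ≤ c * hessPhiOneSup d * (v ⬝ᵥ v) := fun v => by
    rw [smul_mulVec, dotProduct_smul, smul_eq_mul, mul_assoc]
    exact mul_le_mul_of_nonneg_left (dotProduct_hessPhiOne_mulVec_le y v) hc
  calc pucciSup lam Lam (c • hessPhiOne y)
      ≤ c * hessPhiOneSup d * (Fintype.card (Fin d) * Lam) :=
        pucciSup_le_of_dotProduct_mulVec_le_of_nonneg hlam hle
          (mul_nonneg hc (hessPhiOneSup_nonneg d)) hform
    _ = c * (d * Lam * hessPhiOneSup d) := by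
        rw [Fintype.card_fin]
        ring

end PhiOne

theorem Q_is_strict_supersolution_in_strip_general
    (d : ℕ) (lam Lam R : ℝ) (hlam : 0 < lam) (hle : lam ≤ Lam) (hR : R ≠ 0)
    (x : EuclideanSpace ℝ (Fin d)) :
    pucciSup lam Lam
      (Matrix.fromBlocks
        ((R ^ 2)⁻¹ • hessPhiOne (R⁻¹ • x))
        0 0
        (Matrix.of fun (_ _ : Fin 1) =>
          -2 * (max 1 (d * Lam * lam⁻¹ * hessPhiOneSup d)) / R ^ 2))
      ≤ -lam / R ^ 2 := by
  have hR2 : 0 < R ^ 2 := by positivity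
  set N := hessPhiOneSup d
  set K := max 1 (d * Lam * lam⁻¹ * N)
  have hK_one : 1 ≤ K := le_max_left _ _
  have hK : d * Lam * N ≤ lam * K := by
    calc d * Lam * N = lam * (d * Lam * lam⁻¹ * N) := by field_simp
      _ ≤ lam * K := mul_le_mul_of_nonneg_left (le_max_right _ _) hlam.le
  have hmargin : lam ≤ lam * K := le_mul_of_one_le_right hlam.le hK_one
  have hcorner : -2 * K / R ^ 2 ≤ 0 := div_nonpos_of_nonpos_of_nonneg (by linarith) hR2.le
  calc pucciSup lam Lam (Matrix.fromBlocks ((R ^ 2)⁻¹ • hessPhiOne (R⁻¹ • x)) 0 0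
        (Matrix.of fun (_ _ : Fin 1) => -2 * K / R ^ 2))
      ≤ (R ^ 2)⁻¹ * (d * Lam * N) + -2 * K / R ^ 2 * lam :=
        (pucciSup_fromBlocks_zero_le hlam.le hle _ _).trans <| add_le_add
          (pucciSup_smul_hessPhiOne_le hlam.le hle (inv_nonneg.2 hR2.le) _)
          (pucciSup_of_const_le hlam.le hle hcorner)
    _ = (d * Lam * N - 2 * (lam * K)) / R ^ 2 := by ring
    _ ≤ -lam / R ^ 2 := div_le_div_of_nonneg_right (by linarith) hR2.le

/-- with `A := max {1, d Λ λ⁻¹ ‖D²φ₁‖_∞}`, the function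
`Q(x, x_{d+1}) = φ_R(x) + A R⁻¹ x_{d+1} (2 - R⁻¹ x_{d+1})` is a classical strict
supersolution of the Pucci maximal equation in the strip `Σ^{min(r,R)}`: its
(block diagonal) Hessian `diag(R⁻² D²φ₁(x/R), -2AR⁻²)` satisfies
`ℳ⁺(D²Q(X)) < 0` for all `X` in the strip. -/
theorem Q_is_strict_supersolution_in_strip
    (d : ℕ) (lam Lam r R : ℝ) (hlam : 0 < lam) (hle : lam ≤ Lam)
    (hr : 1/2 ≤ r) (hR : 1/2 ≤ R) :
    ∀ (x : EuclideanSpace ℝ (Fin d)) (t : ℝ), 0 < t → t < min r R →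
      pucciSup lam Lam
        (Matrix.fromBlocks
          ((R ^ 2)⁻¹ • hessPhiOne (R⁻¹ • x))
          0 0
          (Matrix.of fun (_ _ : Fin 1) =>
            -2 * (max 1 (d * Lam * lam⁻¹ * hessPhiOneSup d)) / R ^ 2))
        < 0 := by
  have hR_pos : 0 < R := one_half_pos.trans_le hR
  exact fun x _ _ _ =>
    (Q_is_strict_supersolution_in_strip_general d lam Lam R hlam hle hR_pos.ne' x).trans_lt
      (div_neg_of_neg_of_pos (neg_lt_zero.2 hlam) (by positivity))
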